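/- Ellipsoid approximation: for every measurable function r: ℝ^n × F^d → [0,∞) such that r(x,·) is a norm on F^d for each x, there exists a measurable matrix function W: ℝ^n → S_d (Hermitian positive definite) satisfying r(x,u) ≤ |W(x)u| ≤ √d · r(x,u) for all u ∈ F^d and a.e. x. -/

import Mathlib

open MeasureTheory ENNReal

noncomputable section

abbrev Euc (n : ℕ) := EuclideanSpace ℝ (Fin n)

open scoped ComplexOrder

/-- The Euclidean norm of a vector in `ℂ^d`. -/
def evNorm {d : ℕ} (u : Fin d → ℂ) : ℝ := ‖(WithLp.equiv 2 (Fin d → ℂ)).symm u‖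

/-- The operator norm of a `d × d` complex matrix, induced by the Euclidean norm. -/
def opNorm {d : ℕ} (V : Matrix (Fin d) (Fin d) ℂ) : ℝ :=
  ⨆ u : {u : Fin d → ℂ // evNorm u = 1}, evNorm (V.mulVec u)

/-! Call a positive semidefinite form dominated by a norm `p` if it is at most `p²`. Among the
dominated forms there is one, `Q`, of largest determinant: its unit ball is the Löwner ellipsoid of
`p`, the ellipsoid of least volume containing the unit ball of `p`. Moving from `Q` towards another
dominated form does not increase the determinant, so in coordinates where `Q = 1` every dominated
form has trace at most `d`. Applied to the square of a norming functional of `v`, this gives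
`p(v)² ≤ d Q(v, v)`, so `W = √(d Q)` satisfies both inequalities.

The same trace bound shows, by the equality case of AM-GM, that `Q` is the only maximizer. Hence
`Q` depends measurably on the norm, with no selection theorem: closed conditions on `p` and `Q`
involve only the values of `p` on a countable dense set, and a closed set in a product `Y × E` with
`E` σ-compact has a projection to `Y` which is a countable union of closed sets. -/

section MeasurableSelection

variable {X Y E : Type*} [TopologicalSpace Y] [MeasurableSpace Y]
  [TopologicalSpace E] [SigmaCompactSpace E]

theorem measurableSet_fst_image_of_isClosed [OpensMeasurableSpace Y] {C : Set (Y × E)}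
    (hC : IsClosed C) : MeasurableSet (Prod.fst '' C) := by
  have hunion : Prod.fst '' C =
      ⋃ k, Prod.fst '' (C ∩ Prod.snd ⁻¹' compactCovering E k) := by
    rw [← Set.image_iUnion, ← Set.inter_iUnion, ← Set.preimage_iUnion, iUnion_compactCovering,
      Set.preimage_univ, Set.inter_univ]
  rw [hunion]
  refine .iUnion fun k => IsClosed.measurableSet ?_
  have : CompactSpace (compactCovering E k) :=
    isCompact_iff_compactSpace.mp (isCompact_compactCovering E k)
  have himage : Prod.fst '' (C ∩ Prod.snd ⁻¹' compactCovering E k) =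
      Prod.fst '' ((fun z : Y × compactCovering E k => (z.1, (z.2 : E))) ⁻¹' C) := by
    ext y
    simp [and_comm]
  rw [himage]
  exact isClosedMap_fst_of_compactSpace _ (hC.preimage (by fun_prop))

variable [MeasurableSpace X] [MeasurableSpace E] [BorelSpace E] {ρ : X → Y} {f : X → E}

theorem measurable_of_isClosed_relation [OpensMeasurableSpace Y] (hρ : Measurable ρ)
    {C : Set (Y × E)} (hC : IsClosed C) (hf : ∀ x e, (ρ x, e) ∈ C ↔ e = f x) : Measurable f := by
  refine measurable_of_isClosed fun F hF => ?_
  have hpreimage : f ⁻¹' F = ρ ⁻¹' (Prod.fst '' (C ∩ Prod.snd ⁻¹' F)) := by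
    ext x
    simp [hf]
  rw [hpreimage]
  exact hρ (measurableSet_fst_image_of_isClosed (hC.inter (hF.preimage continuous_snd)))

theorem measurable_of_unique_maximizer [SecondCountableTopology Y] [OpensMeasurableSpace Y]
    (hρ : Measurable ρ) {C : Set (Y × E)} (hC : IsClosed C) {g : E → ℝ} (hg : Continuous g)
    (hmem : ∀ x, (ρ x, f x) ∈ C) (hmax : ∀ x e, (ρ x, e) ∈ C → g e ≤ g (f x))
    (huniq : ∀ x e, (ρ x, e) ∈ C → g (f x) ≤ g e → e = f x) : Measurable f := by
  have hvalue : Measurable fun x => g (f x) := by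
    refine measurable_of_Ici fun a => ?_
    have hpreimage : (fun x => g (f x)) ⁻¹' Set.Ici a =
        ρ ⁻¹' (Prod.fst '' (C ∩ Prod.snd ⁻¹' (g ⁻¹' Set.Ici a))) := by
      ext x
      simp only [Set.mem_preimage, Set.mem_Ici, Set.mem_image, Set.mem_inter_iff, Prod.exists,
        exists_and_right, exists_eq_right]
      exact ⟨fun h => ⟨f x, hmem x, h⟩, fun ⟨e, he, h⟩ => h.trans (hmax x e he)⟩
    rw [hpreimage]
    exact hρ (measurableSet_fst_image_of_isClosed
      (hC.inter ((isClosed_Ici.preimage hg).preimage continuous_snd)))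
  have hvalue_le : IsClosed {z : (Y × ℝ) × E | z.1.2 ≤ g z.2} :=
    isClosed_le (by fun_prop) (by fun_prop)
  have hproj : Continuous fun z : (Y × ℝ) × E => (z.1.1, z.2) := by fun_prop
  refine measurable_of_isClosed_relation (hρ.prodMk hvalue)
    ((hC.preimage hproj).inter hvalue_le) fun x e => ?_
  refine ⟨fun ⟨h, h'⟩ => huniq x e h h', ?_⟩
  rintro rfl
  exact ⟨hmem x, le_refl (g (f x))⟩

end MeasurableSelection

section Seminorm

variable {𝕜 E : Type*} [RCLike 𝕜] [AddCommGroup E] [Module 𝕜 E]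

theorem exists_dual_eq_seminorm (p : Seminorm 𝕜 E) (v : E) :
    ∃ f : Module.Dual 𝕜 E, f v = p v ∧ ∀ u, ‖f u‖ ≤ p u := by
  let : SeminormedAddCommGroup E := p.toAddGroupSeminorm.toSeminormedAddCommGroup
  let : NormedSpace 𝕜 E := ⟨fun c u => (map_smul_eq_mul p c u).le⟩
  obtain ⟨f, hf, hfv⟩ := exists_dual_vector'' 𝕜 v
  exact ⟨f, hfv, fun u => (f.le_of_opNorm_le hf u).trans_eq (one_mul _)⟩

theorem exists_norm_le_mul_seminorm {F : Type*} [NormedAddCommGroup F] [NormedSpace 𝕜 F]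
    [FiniteDimensional 𝕜 E] (p : Seminorm 𝕜 E) (hp : ∀ u, p u = 0 → u = 0) (f : E →ₗ[𝕜] F) :
    ∃ C : ℝ, ∀ u, ‖f u‖ ≤ C * p u := by
  let : NormedAddCommGroup E :=
    AddGroupNorm.toNormedAddCommGroup
      { p.toAddGroupSeminorm with eq_zero_of_map_eq_zero' := hp }
  let : NormedSpace 𝕜 E := ⟨fun c u => (map_smul_eq_mul p c u).le⟩
  exact ⟨‖LinearMap.toContinuousLinearMap f‖, (LinearMap.toContinuousLinearMap f).le_opNorm⟩

theorem continuous_seminorm {E : Type*} [NormedAddCommGroup E] [NormedSpace ℝ E]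
    [Module 𝕜 E] [IsScalarTower ℝ 𝕜 E] [FiniteDimensional ℝ E] (p : Seminorm 𝕜 E) :
    Continuous p :=
  continuousOn_univ.mp (p.convexOn.continuousOn isOpen_univ)

open Matrix in
theorem exists_dotProduct_eq_seminorm {ι : Type*} [Fintype ι] (p : Seminorm 𝕜 (ι → 𝕜))
    (v : ι → 𝕜) : ∃ w : ι → 𝕜, w ⬝ᵥ v = p v ∧ ∀ u, ‖w ⬝ᵥ u‖ ≤ p u := by
  classical
  obtain ⟨f, hfv, hf⟩ := exists_dual_eq_seminorm p v
  have hrepr : ∀ u, (dotProductEquiv 𝕜 ι).symm f ⬝ᵥ u = f u := fun u =>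
    congrArg (· u) ((dotProductEquiv 𝕜 ι).apply_symm_apply f)
  exact ⟨_, (hrepr v).trans hfv, fun u => (hrepr u).symm ▸ hf u⟩

end Seminorm

section Matrix

open Matrix WithLp
open RCLike (re)
open scoped MatrixOrder

variable {𝕜 ι : Type*} [RCLike 𝕜]

instance {m n R : Type*} [Finite m] [Finite n] [TopologicalSpace R] [SigmaCompactSpace R] :
    SigmaCompactSpace (Matrix m n R) :=
  inferInstanceAs (SigmaCompactSpace (m → n → R))

theorem isClosed_posSemidef [Finite ι] : IsClosed {A : Matrix ι ι 𝕜 | A.PosSemidef} := by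
  have := Fintype.ofFinite ι
  simp only [posSemidef_iff_dotProduct_mulVec, Set.ofPred_and, Set.ofPred_forall]
  exact (isClosed_eq (by fun_prop) continuous_id).inter (isClosed_iInter fun u =>
    isClosed_Ici.preimage (f := fun A : Matrix ι ι 𝕜 => star u ⬝ᵥ (A *ᵥ u)) (by fun_prop))

variable [Fintype ι]

theorem re_star_dotProduct_self (u : ι → 𝕜) : re (star u ⬝ᵥ u) = ‖toLp 2 u‖ ^ 2 := by
  rw [dotProduct_comm, ← EuclideanSpace.inner_toLp_toLp, inner_self_eq_norm_sq]

theorem re_star_dotProduct_conjTranspose_mul_self_mulVec (M : Matrix ι ι 𝕜) (u : ι → 𝕜) :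
    re (star u ⬝ᵥ ((Mᴴ * M) *ᵥ u)) = ‖toLp 2 (M *ᵥ u)‖ ^ 2 := by
  rw [← mulVec_mulVec, dotProduct_mulVec, vecMul_conjTranspose, star_star, re_star_dotProduct_self]

theorem exists_eq_conjTranspose_mul_self_of_posSemidef {Q : Matrix ι ι 𝕜}
    (hQ : Q.PosSemidef) : ∃ M : Matrix ι ι 𝕜, Q = Mᴴ * M := by
  classical
  exact CStarAlgebra.nonneg_iff_eq_star_mul_self.mp hQ.nonneg

theorem exists_eq_conjTranspose_mul_self_of_posDef [DecidableEq ι] {Q : Matrix ι ι 𝕜}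
    (hQ : Q.PosDef) : ∃ M : Matrix ι ι 𝕜, M.det ≠ 0 ∧ Q = Mᴴ * M := by
  obtain ⟨M, rfl⟩ := exists_eq_conjTranspose_mul_self_of_posSemidef hQ.posSemidef
  exact ⟨M, right_ne_zero_of_mul (det_mul Mᴴ M ▸ hQ.det_pos.ne'), rfl⟩

open scoped Classical in
theorem sq_norm_sqrt_mulVec {Q : Matrix ι ι 𝕜} (hQ : Q.PosSemidef) (u : ι → 𝕜) :
    ‖toLp 2 (CFC.sqrt Q *ᵥ u)‖ ^ 2 = re (star u ⬝ᵥ (Q *ᵥ u)) := by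
  rw [← re_star_dotProduct_conjTranspose_mul_self_mulVec,
    (CFC.sqrt_nonneg Q).posSemidef.isHermitian.eq, CFC.sqrt_mul_sqrt_self Q hQ.nonneg]

open scoped Classical in
theorem measurable_sqrt {X : Type*} [MeasurableSpace X] [MeasurableSpace (Matrix ι ι 𝕜)]
    [BorelSpace (Matrix ι ι 𝕜)] {Q : X → Matrix ι ι 𝕜} (hQ : Measurable Q)
    (hpos : ∀ x, (Q x).PosSemidef) : Measurable fun x => CFC.sqrt (Q x) := by
  have hclosed : IsClosed {z : Matrix ι ι 𝕜 × Matrix ι ι 𝕜 | z.2.PosSemidef ∧ z.2 * z.2 = z.1} :=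
    (isClosed_posSemidef.preimage continuous_snd).inter (isClosed_eq (by fun_prop) (by fun_prop))
  refine measurable_of_isClosed_relation hQ hclosed fun x W => ?_
  refine ⟨fun h => (CFC.sqrt_unique h.2 h.1.nonneg).symm, ?_⟩
  rintro rfl
  exact ⟨(CFC.sqrt_nonneg (Q x)).posSemidef, CFC.sqrt_mul_sqrt_self (Q x) (hpos x).nonneg⟩

theorem posDef_card_smul {Q : Matrix ι ι 𝕜} (hQ : Q.PosDef) :
    ((Fintype.card ι : ℝ) • Q).PosDef := by
  classical
  rcases isEmpty_or_nonempty ι with _ | _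
  · exact Subsingleton.elim 1 ((Fintype.card ι : ℝ) • Q) ▸ PosDef.one
  · exact hQ.smul (Nat.cast_pos.mpr Fintype.card_pos)

end Matrix

section Determinant

open Matrix
open RCLike (re)

variable {𝕜 ι : Type*} [Fintype ι] [DecidableEq ι]

theorem hasDerivAt_det_one_add_smul [NontriviallyNormedField 𝕜] (A : Matrix ι ι 𝕜) :
    HasDerivAt (fun z : 𝕜 => (1 + z • A).det) A.trace 0 := by
  rw [funext fun z : 𝕜 => det_one_add_smul z A]
  set q := (det (1 + (Polynomial.X : Polynomial 𝕜) • A.map Polynomial.C)).divX.divX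
  convert! ((hasDerivAt_id (0 : 𝕜)).const_mul A.trace).const_add 1 |>.add
    ((q.hasDerivAt 0).mul (hasDerivAt_pow 2 (0 : 𝕜))) using 1
  simp

variable [RCLike 𝕜]

theorem hasDerivAt_re_det_one_add_smul (A : Matrix ι ι 𝕜) :
    HasDerivAt (fun t : ℝ => re (1 + t • A).det) (re A.trace) 0 := by
  have hA : HasDerivAt (fun z : 𝕜 => (1 + z • A).det) A.trace (RCLike.ofRealCLM (K := 𝕜) 0) := by
    simpa using hasDerivAt_det_one_add_smul A
  have := RCLike.reCLM.hasFDerivAt.comp_hasDerivAt (0 : ℝ)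
    (hA.scomp (0 : ℝ) (RCLike.ofRealCLM (K := 𝕜)).hasDerivAt)
  simpa [Function.comp_def] using this

theorem re_trace_nonpos_of_re_det_le_one {A : Matrix ι ι 𝕜}
    (hA : ∀ t : ℝ, 0 < t → t < 1 → re (1 + t • A).det ≤ 1) : re A.trace ≤ 0 := by
  refine le_of_tendsto (hasDerivAt_re_det_one_add_smul A).tendsto_slope_zero_right ?_
  filter_upwards [Ioo_mem_nhdsGT one_pos] with t ht
  have hdet : re (1 + t • A).det - 1 ≤ 0 := sub_nonpos.mpr (hA t ht.1 ht.2)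
  simpa using mul_nonpos_of_nonneg_of_nonpos (inv_nonneg.mpr ht.1.le) hdet

theorem re_det_conjTranspose_mul_mul_same (M A : Matrix ι ι 𝕜) :
    re (Mᴴ * A * M).det = ‖M.det‖ ^ 2 * re A.det := by
  rw [det_mul_right_comm, det_mul, det_mul, det_conjTranspose, RCLike.star_def, RCLike.conj_mul,
    ← RCLike.ofReal_pow, RCLike.re_ofReal_mul]

theorem re_det_conjTranspose_mul_self (M : Matrix ι ι 𝕜) :
    re (Mᴴ * M).det = ‖M.det‖ ^ 2 := by
  simpa using re_det_conjTranspose_mul_mul_same M 1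

theorem re_trace_le_card_of_isMaxOn_re_det {K : Set (Matrix ι ι 𝕜)} (hK : Convex ℝ K)
    {M S : Matrix ι ι 𝕜} (hM : M.det ≠ 0) (hmem : Mᴴ * M ∈ K)
    (hmax : IsMaxOn (fun B => re B.det) K (Mᴴ * M)) (hS : Mᴴ * S * M ∈ K) :
    re S.trace ≤ Fintype.card ι := by
  have hpos : 0 < ‖M.det‖ ^ 2 := by positivity
  suffices re (S - 1).trace ≤ 0 by simpa [trace_sub] using this
  refine re_trace_nonpos_of_re_det_le_one fun t ht₀ ht₁ => ?_
  have hseg : Mᴴ * (1 + t • (S - 1)) * M ∈ K := by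
    convert hK hmem hS (sub_nonneg.mpr ht₁.le) ht₀.le (sub_add_cancel 1 t) using 1
    simp only [mul_add, add_mul, mul_sub, sub_mul, Matrix.mul_smul, Matrix.smul_mul,
      Matrix.mul_one, sub_smul, smul_sub, one_smul]
    abel
  have hle : re (Mᴴ * (1 + t • (S - 1)) * M).det ≤ re (Mᴴ * M).det := hmax hseg
  rw [re_det_conjTranspose_mul_mul_same, re_det_conjTranspose_mul_self] at hle
  exact (mul_le_iff_le_one_right hpos).mp hle

end Determinant

section Uniqueness

open Matrix
open RCLike (re)

variable {𝕜 ι : Type*} [RCLike 𝕜] [Fintype ι]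

theorem eq_one_of_sum_le_card_of_one_le_prod {lam : ι → ℝ} (hnn : ∀ i, 0 ≤ lam i)
    (hsum : ∑ i, lam i ≤ Fintype.card ι) (hprod : 1 ≤ ∏ i, lam i) : lam = 1 := by
  have hpos : ∀ i, 0 < lam i := fun i => (hnn i).lt_of_ne' fun h =>
    absurd hprod (by simp [Finset.prod_eq_zero (Finset.mem_univ i) h])
  have hlog : 0 ≤ ∑ i, Real.log (lam i) := by
    rw [← Real.log_prod fun i _ => (hpos i).ne']
    exact Real.log_nonneg hprod
  have hterm : ∀ i ∈ Finset.univ, 0 ≤ lam i - 1 - Real.log (lam i) := fun i _ =>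
    sub_nonneg.mpr (Real.log_le_sub_one_of_pos (hpos i))
  have hzero : ∑ i, (lam i - 1 - Real.log (lam i)) = 0 := by
    refine le_antisymm ?_ (Finset.sum_nonneg hterm)
    simp only [Finset.sum_sub_distrib, Finset.sum_const, Finset.card_univ, nsmul_eq_mul, mul_one]
    linarith
  ext i
  by_contra hne
  exact absurd ((Finset.sum_eq_zero_iff_of_nonneg hterm).mp hzero i (Finset.mem_univ i))
    (sub_pos.mpr (Real.log_lt_sub_one_of_pos (hpos i) hne)).ne'

variable [DecidableEq ι]

theorem eq_one_of_posSemidef_of_re_trace_le_card {S : Matrix ι ι 𝕜} (hS : S.PosSemidef)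
    (htrace : re S.trace ≤ Fintype.card ι) (hdet : 1 ≤ re S.det) : S = 1 := by
  have hherm := hS.isHermitian
  rw [hherm.trace_eq_sum_eigenvalues, ← RCLike.ofReal_sum, RCLike.ofReal_re] at htrace
  rw [hherm.det_eq_prod_eigenvalues, ← RCLike.ofReal_prod, RCLike.ofReal_re] at hdet
  have hone := eq_one_of_sum_le_card_of_one_le_prod hS.eigenvalues_nonneg htrace hdet
  rw [hherm.spectral_theorem, hone]
  have : (RCLike.ofReal ∘ (1 : ι → ℝ) : ι → 𝕜) = fun _ => 1 := by ext; simp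
  rw [this, diagonal_one, map_one]

theorem eq_of_isMaxOn_re_det {K : Set (Matrix ι ι 𝕜)} (hK : Convex ℝ K) {Q B : Matrix ι ι 𝕜}
    (hQ : Q.PosDef) (hQK : Q ∈ K) (hmax : IsMaxOn (fun B => re B.det) K Q)
    (hB : B.PosSemidef) (hBK : B ∈ K) (hle : re Q.det ≤ re B.det) : B = Q := by
  obtain ⟨M, hM, rfl⟩ := exists_eq_conjTranspose_mul_self_of_posDef hQ
  have hinv : M⁻¹ * M = 1 := nonsing_inv_mul M hM.isUnit
  set S := (M⁻¹)ᴴ * B * M⁻¹ with hS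
  have hBS : B = Mᴴ * S * M := by
    calc B = (M⁻¹ * M)ᴴ * B * (M⁻¹ * M) := by simp [hinv]
      _ = Mᴴ * S * M := by simp only [hS, conjTranspose_mul, Matrix.mul_assoc]
  have htrace : re S.trace ≤ Fintype.card ι :=
    re_trace_le_card_of_isMaxOn_re_det hK hM hQK hmax (hBS ▸ hBK)
  have hdet : 1 ≤ re S.det := by
    have hpos : 0 < ‖M.det‖ ^ 2 := by positivity
    rwa [hBS, re_det_conjTranspose_mul_mul_same, re_det_conjTranspose_mul_self,
      le_mul_iff_one_le_right hpos] at hle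
  have hS_one : S = 1 :=
    eq_one_of_posSemidef_of_re_trace_le_card (hB.conjTranspose_mul_mul_same M⁻¹) htrace hdet
  rw [hBS, hS_one, Matrix.mul_one]

end Uniqueness

section DominatedForms

open Matrix WithLp
open RCLike (re)

variable {𝕜 ι : Type*} [RCLike 𝕜] [Fintype ι]

/-- The positive semidefinite forms bounded by `p ^ 2`, that is, whose (possibly unbounded)
ellipsoid `{u | u* Q u ≤ 1}` contains the unit ball of `p`. Forms `Q = W²` are used instead of the
matrices `W` because they make up a convex set, and singular ones are allowed in order to include
the squares of linear functionals. -/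
def dominatedForms (p : Seminorm 𝕜 (ι → 𝕜)) : Set (Matrix ι ι 𝕜) :=
  {Q | Q.PosSemidef ∧ ∀ u, re (star u ⬝ᵥ (Q *ᵥ u)) ≤ p u ^ 2}

variable (p : Seminorm 𝕜 (ι → 𝕜))

theorem convex_dominatedForms : Convex ℝ (dominatedForms p) := by
  rintro A ⟨hA, hAp⟩ B ⟨hB, hBp⟩ a b ha hb hab
  refine ⟨(hA.smul ha).add (hB.smul hb), fun u => ?_⟩
  calc re (star u ⬝ᵥ ((a • A + b • B) *ᵥ u))
      = a * re (star u ⬝ᵥ (A *ᵥ u)) + b * re (star u ⬝ᵥ (B *ᵥ u)) := by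
        simp only [add_mulVec, smul_mulVec, dotProduct_add, dotProduct_smul, map_add,
          RCLike.smul_re]
    _ ≤ a * p u ^ 2 + b * p u ^ 2 := by gcongr <;> simp only [hAp, hBp]
    _ = p u ^ 2 := by rw [← add_mul, hab, one_mul]

variable {p}

theorem vecMulVec_mem_dominatedForms {w : ι → 𝕜} (hw : ∀ u, ‖w ⬝ᵥ u‖ ≤ p u) :
    vecMulVec (star w) w ∈ dominatedForms p := by
  refine ⟨posSemidef_vecMulVec_star_self w, fun u => ?_⟩
  calc re (star u ⬝ᵥ (vecMulVec (star w) w *ᵥ u)) = ‖w ⬝ᵥ u‖ ^ 2 := by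
        rw [vecMulVec_mulVec, dotProduct_smul, star_dotProduct_star, op_smul_eq_mul,
          RCLike.star_def, RCLike.conj_mul, ← RCLike.ofReal_pow, RCLike.ofReal_re]
    _ ≤ p u ^ 2 := pow_le_pow_left₀ (norm_nonneg _) (hw u) 2

theorem mem_dominatedForms_iff_of_denseRange {κ : Type*} {v : κ → ι → 𝕜} (hv : DenseRange v)
    {Q : Matrix ι ι 𝕜} :
    Q ∈ dominatedForms p ↔
      Q.PosSemidef ∧ ∀ k, re (star (v k) ⬝ᵥ (Q *ᵥ v k)) ≤ p (v k) ^ 2 := by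
  refine and_congr_right fun _ => ⟨fun h k => h (v k), fun h u => ?_⟩
  have hp : Continuous p := continuous_seminorm p
  exact hv.induction_on (p := fun u => re (star u ⬝ᵥ (Q *ᵥ u)) ≤ p u ^ 2) u
    (isClosed_le (by fun_prop) (by fun_prop)) h

theorem norm_apply_le_of_mem_dominatedForms [DecidableEq ι] {Q : Matrix ι ι 𝕜}
    (hQ : Q ∈ dominatedForms p) (i j : ι) :
    ‖Q i j‖ ≤ p (Pi.single i 1) * p (Pi.single j 1) := by
  obtain ⟨M, rfl⟩ := exists_eq_conjTranspose_mul_self_of_posSemidef hQ.1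
  have hM : ∀ u, ‖toLp 2 (M *ᵥ u)‖ ≤ p u := fun u => by
    have := hQ.2 u
    rwa [re_star_dotProduct_conjTranspose_mul_self_mulVec,
      sq_le_sq₀ (norm_nonneg _) (apply_nonneg p u)] at this
  have hentry : (Mᴴ * M) i j =
      inner 𝕜 (toLp 2 (M *ᵥ Pi.single i 1)) (toLp 2 (M *ᵥ Pi.single j 1)) := by
    simp [Matrix.mul_apply, PiLp.inner_apply, mul_comm]
  rw [hentry]
  exact (norm_inner_le_norm _ _).trans (mul_le_mul (hM _) (hM _) (norm_nonneg _) (apply_nonneg p _))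

variable (p) in
theorem isCompact_dominatedForms : IsCompact (dominatedForms p) := by
  classical
  have hbox : IsCompact (Set.univ.pi fun i => Set.univ.pi fun j =>
      Metric.closedBall (0 : 𝕜) (p (Pi.single i 1) * p (Pi.single j 1))) :=
    isCompact_univ_pi fun _ => isCompact_univ_pi fun _ => isCompact_closedBall _ _
  refine hbox.of_isClosed_subset ?_ fun Q hQ i _ j _ => by
    simpa using norm_apply_le_of_mem_dominatedForms hQ i j
  simp only [dominatedForms, Set.ofPred_and, Set.ofPred_forall]
  exact isClosed_posSemidef.inter
    (isClosed_iInter fun u => isClosed_le (by fun_prop) continuous_const)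

theorem exists_posDef_mem_dominatedForms (hp : ∀ u, p u = 0 → u = 0) :
    ∃ Q ∈ dominatedForms p, Q.PosDef := by
  classical
  obtain ⟨C, hC⟩ := exists_norm_le_mul_seminorm p hp
    (WithLp.linearEquiv 2 𝕜 (ι → 𝕜)).symm.toLinearMap
  have hC' : ∀ u, ‖toLp 2 u‖ ^ 2 ≤ (1 + C ^ 2) * p u ^ 2 := fun u => by
    calc ‖toLp 2 u‖ ^ 2 ≤ (C * p u) ^ 2 := pow_le_pow_left₀ (norm_nonneg _) (hC u) 2
      _ ≤ (1 + C ^ 2) * p u ^ 2 := by nlinarith [sq_nonneg (p u)]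
  have hpos : 0 < 1 + C ^ 2 := by positivity
  have hdef : ((1 + C ^ 2)⁻¹ • (1 : Matrix ι ι 𝕜)).PosDef := PosDef.one.smul (inv_pos.mpr hpos)
  refine ⟨_, ⟨hdef.posSemidef, fun u => ?_⟩, hdef⟩
  rw [smul_mulVec, one_mulVec, dotProduct_smul, RCLike.smul_re, re_star_dotProduct_self,
    inv_mul_le_iff₀ hpos]
  exact hC' u

end DominatedForms

section IsLownerForm

open Matrix WithLp
open RCLike (re)

variable {𝕜 ι : Type*} [RCLike 𝕜] [Fintype ι] [DecidableEq ι] {p : Seminorm 𝕜 (ι → 𝕜)}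

/-- `Q` is the Gram matrix of the Löwner ellipsoid of `p`: the ellipsoid `{u | u* Q u ≤ 1}` contains
the unit ball of `p`, and has the least volume among all ellipsoids which do. -/
structure IsLownerForm (p : Seminorm 𝕜 (ι → 𝕜)) (Q : Matrix ι ι 𝕜) : Prop where
  mem : Q ∈ dominatedForms p
  posDef : Q.PosDef
  isMaxOn : IsMaxOn (fun B => re B.det) (dominatedForms p) Q

theorem exists_isLownerForm (hp : ∀ u, p u = 0 → u = 0) : ∃ Q, IsLownerForm p Q := by
  obtain ⟨B, hB, hBdef⟩ := exists_posDef_mem_dominatedForms hp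
  have hcont : Continuous fun A : Matrix ι ι 𝕜 => re A.det := by fun_prop
  obtain ⟨Q, hQ, hmax⟩ := (isCompact_dominatedForms p).exists_isMaxOn ⟨B, hB⟩ hcont.continuousOn
  have hdet : 0 < re Q.det := (RCLike.pos_iff.mp hBdef.det_pos).1.trans_le (hmax hB)
  refine ⟨Q, hQ, hQ.1.posDef_iff_det_ne_zero.mpr fun h => ?_, hmax⟩
  simp [h] at hdet

theorem IsLownerForm.eq_of_re_det_le {Q B : Matrix ι ι 𝕜} (hQ : IsLownerForm p Q)
    (hB : B ∈ dominatedForms p) (hle : re Q.det ≤ re B.det) : B = Q :=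
  eq_of_isMaxOn_re_det (convex_dominatedForms p) hQ.posDef hQ.mem hQ.isMaxOn hB.1 hB hle

theorem IsLownerForm.sq_le_card_mul {Q : Matrix ι ι 𝕜} (hQ : IsLownerForm p Q) (v : ι → 𝕜) :
    p v ^ 2 ≤ Fintype.card ι * re (star v ⬝ᵥ (Q *ᵥ v)) := by
  obtain ⟨M, hM, rfl⟩ := exists_eq_conjTranspose_mul_self_of_posDef hQ.posDef
  obtain ⟨w, hwv, hw⟩ := exists_dotProduct_eq_seminorm p v
  set z := w ᵥ* M⁻¹ with hz
  have hzM : z ᵥ* M = w := by rw [hz, vecMul_vecMul, nonsing_inv_mul M hM.isUnit, vecMul_one]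
  have hrank_one : Mᴴ * vecMulVec (star z) z * M = vecMulVec (star w) w := by
    rw [mul_vecMulVec, vecMulVec_mul, hzM, ← star_vecMul, hzM]
  have hz_norm : ‖toLp 2 (star z)‖ ^ 2 ≤ Fintype.card ι := by
    have := re_trace_le_card_of_isMaxOn_re_det (convex_dominatedForms p) hM hQ.mem hQ.isMaxOn
      (hrank_one ▸ vecMulVec_mem_dominatedForms hw)
    rw [trace_vecMulVec] at this
    simpa [← re_star_dotProduct_self, dotProduct_comm] using this
  calc p v ^ 2 = ‖z ⬝ᵥ (M *ᵥ v)‖ ^ 2 := by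
        rw [dotProduct_mulVec, hzM, hwv, RCLike.norm_of_nonneg (apply_nonneg p v)]
    _ ≤ (‖toLp 2 (star z)‖ * ‖toLp 2 (M *ᵥ v)‖) ^ 2 := by
        gcongr
        have := norm_inner_le_norm (𝕜 := 𝕜) (toLp 2 (star z)) (toLp 2 (M *ᵥ v))
        rwa [EuclideanSpace.inner_toLp_toLp, star_star, dotProduct_comm] at this
    _ ≤ Fintype.card ι * re (star v ⬝ᵥ ((Mᴴ * M) *ᵥ v)) := by
        rw [mul_pow, re_star_dotProduct_conjTranspose_mul_self_mulVec]
        gcongr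

theorem measurable_of_isLownerForm {X : Type*} [MeasurableSpace X]
    [MeasurableSpace (Matrix ι ι 𝕜)] [BorelSpace (Matrix ι ι 𝕜)]
    {p : X → Seminorm 𝕜 (ι → 𝕜)} (hmeas : ∀ u, Measurable fun x => p x u)
    {Q : X → Matrix ι ι 𝕜} (hQ : ∀ x, IsLownerForm (p x) (Q x)) : Measurable Q := by
  let v := TopologicalSpace.denseSeq (ι → 𝕜)
  have hv : DenseRange v := TopologicalSpace.denseRange_denseSeq _
  let C : Set ((ℕ → ℝ) × Matrix ι ι 𝕜) :=
    {z | z.2.PosSemidef ∧ ∀ k, re (star (v k) ⬝ᵥ (z.2 *ᵥ v k)) ≤ z.1 k ^ 2}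
  have hC : IsClosed C := by
    simp only [C, Set.ofPred_and, Set.ofPred_forall]
    exact (isClosed_posSemidef.preimage continuous_snd).inter
      (isClosed_iInter fun k => isClosed_le (by fun_prop) (by fun_prop))
  have hmem_C : ∀ x B, ((fun k => p x (v k)), B) ∈ C ↔ B ∈ dominatedForms (p x) := fun x B =>
    (mem_dominatedForms_iff_of_denseRange hv).symm
  exact measurable_of_unique_maximizer (measurable_pi_lambda _ fun k => hmeas (v k)) hC
    (g := fun B => re B.det) (by fun_prop) (fun x => (hmem_C x _).mpr (hQ x).mem)
    (fun x B hB => (hQ x).isMaxOn ((hmem_C x B).mp hB))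
    (fun x B hB => (hQ x).eq_of_re_det_le ((hmem_C x B).mp hB))

end IsLownerForm

open Matrix WithLp in
open scoped MatrixOrder in
theorem stmt14_general {X 𝕜 ι : Type*} [MeasurableSpace X] [RCLike 𝕜] [Fintype ι]
    {p : X → Seminorm 𝕜 (ι → 𝕜)}
    (hmeas : ∀ u, Measurable fun x => p x u) (hp : ∀ x u, p x u = 0 → u = 0) :
    ∃ W : X → Matrix ι ι 𝕜,
      (∀ i j, Measurable fun x => W x i j) ∧ (∀ x, (W x).PosDef) ∧
        ∀ x u, p x u ≤ ‖toLp 2 (W x *ᵥ u)‖ ∧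
          ‖toLp 2 (W x *ᵥ u)‖ ≤ √(Fintype.card ι) * p x u := by
  classical
  borelize (Matrix ι ι 𝕜)
  choose Q hQ using fun x => exists_isLownerForm (hp x)
  have hQmeas : Measurable Q := measurable_of_isLownerForm hmeas hQ
  have hdQ : ∀ x, ((Fintype.card ι : ℝ) • Q x).PosDef := fun x => posDef_card_smul (hQ x).posDef
  have hnorm : ∀ x u, ‖toLp 2 (CFC.sqrt ((Fintype.card ι : ℝ) • Q x) *ᵥ u)‖ ^ 2 =
      Fintype.card ι * RCLike.re (star u ⬝ᵥ (Q x *ᵥ u)) := fun x u => by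
    rw [sq_norm_sqrt_mulVec (hdQ x).posSemidef, smul_mulVec, dotProduct_smul, RCLike.smul_re]
  refine ⟨fun x => CFC.sqrt ((Fintype.card ι : ℝ) • Q x), fun i j => ?_,
    fun x => (hdQ x).isStrictlyPositive.sqrt.posDef, fun x u => ⟨?_, ?_⟩⟩
  · have hsqrt := measurable_sqrt (hQmeas.const_smul (Fintype.card ι : ℝ))
      fun x => (hdQ x).posSemidef
    exact (continuous_id.matrix_elem i j).measurable.comp hsqrt
  · refine (sq_le_sq₀ (apply_nonneg _ _) (norm_nonneg _)).mp ?_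
    rw [hnorm]
    exact (hQ x).sq_le_card_mul u
  · refine (sq_le_sq₀ (norm_nonneg _) (by positivity)).mp ?_
    rw [hnorm, mul_pow, Real.sq_sqrt (Nat.cast_nonneg _)]
    gcongr
    exact (hQ x).mem.2 u

/-- ellipsoid approximation. For every measurable function
`r : ℝⁿ × ℂ^d → [0,∞)` such that `r(x,·)` is a norm on `ℂ^d` for each `x`, there exists
a measurable matrix function `W : ℝⁿ → S_d` (Hermitian positive definite) satisfying
`r(x,u) ≤ |W(x)u| ≤ √d · r(x,u)` for all `u ∈ ℂ^d` and a.e. `x`. -/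
theorem stmt14 {n d : ℕ} (r : Euc n → (Fin d → ℂ) → ℝ)
    (hmeas : Measurable fun z : Euc n × (Fin d → ℂ) => r z.1 z.2)
    (hnn : ∀ x u, 0 ≤ r x u)
    (hzero : ∀ x u, r x u = 0 ↔ u = 0)
    (hsmul : ∀ x (c : ℂ) u, r x (c • u) = ‖c‖ * r x u)
    (htri : ∀ x u v, r x (u + v) ≤ r x u + r x v) :
    ∃ W : Euc n → Matrix (Fin d) (Fin d) ℂ,
      (∀ i j, Measurable fun x => W x i j) ∧ (∀ x, (W x).PosDef) ∧
        ∀ᵐ x : Euc n, ∀ u : Fin d → ℂ,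
          r x u ≤ evNorm ((W x).mulVec u) ∧
            evNorm ((W x).mulVec u) ≤ Real.sqrt d * r x u := by
  let p : Euc n → Seminorm ℂ (Fin d → ℂ) := fun x => Seminorm.of (r x) (htri x) (hsmul x)
  have hp : ∀ u, Measurable fun x => p x u := fun u =>
    hmeas.comp (measurable_id.prodMk measurable_const)
  obtain ⟨W, hW, hWpos, hWp⟩ := stmt14_general hp fun x u => (hzero x u).mp
  refine ⟨W, hW, hWpos, .of_forall fun x u => ?_⟩
  have hx := hWp x u
  rw [Fintype.card_fin] at hx
  exact hx
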